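/- Let E be a finite-dimensional real inner product space, μ ∈ (0,1), r > 0, 0 ≤ a, r ≤ b, and let A, S ⊆ E be nonempty compact sets; set δ = hausdorffDist S A. Suppose no point x ∉ S with d_S(x) ∈ [a, b] is a μ-critical point of d_S, and suppose δ ≤ min(r − a, μ(b − r)/(4 − μ)) and δ < μ²r/(4 + μ²). Then the offsets S_r and A_r are homotopy equivalent (as topological subspaces of E). -/

import Mathlib

open Metric

/-!
A *descent direction* of `d_K` at `x` is a vector making an acute angle with `q - x` for every point
`q` of `K` nearest to `x`. Descent directions form an open relation with convex fibres, so a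
partition of unity glues pointwise choices into a continuous field, and small Euler steps along it
decrease `d_K` uniformly on compact sets. If `S_c ⊆ A_r` and `d_S`, `d_A` have a common descent
direction at every point of `A_r` where `d_S ≥ c`, iterating these steps deforms `A_r` into `S_c`.

Such common directions come from climbing `d_S`. Where there are no `μ`-critical points, `d_S` grows
at rate at least `μ` in some direction, so from `x` one reaches a point `y` within distance `4δ/μ`
at which `d_S` is larger by `4δ` (or at least `r + 3δ`). Since `d_S` and `d_A` differ by at most
`δ`, both have grown by at least `2δ`, and `δ < μ²r / (4 + μ²)` is exactly what makes this growth
large enough compared with `dist y x` for `x - y` to be a descent direction of both. Taking first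
`S` itself and then `A` as the second set, both `S_r` and `A_r` deform into `S_{r - δ}`.
-/

open Set Filter Topology

section Homotopy

lemma homotopic_id_iterate {X : Type*} [TopologicalSpace X] {F : C(X, X)}
    (hF : F.Homotopic (.id X)) (n : ℕ) :
    ContinuousMap.Homotopic ⟨F^[n], F.continuous.iterate n⟩ (.id X) := by
  induction n with
  | zero => exact .refl _
  | succ n ih => exact ih.comp hF

lemma nonempty_homotopyEquiv_of_mapsTo_iterate {X : Type*} [TopologicalSpace X] {P Q : Set X}
    {F : X → X} (hF : Continuous F) (hPQ : P ⊆ Q) (hP : MapsTo F P P) (hQ : MapsTo F Q Q)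
    (hP_id : ContinuousMap.Homotopic ⟨hP.restrict, hF.restrict hP⟩ (.id P))
    (hQ_id : ContinuousMap.Homotopic ⟨hQ.restrict, hF.restrict hQ⟩ (.id Q))
    {n : ℕ} (hn : MapsTo F^[n] Q P) :
    Nonempty (ContinuousMap.HomotopyEquiv P Q) := by
  let retraction : C(Q, P) := ⟨hn.restrict, (hF.iterate n).restrict hn⟩
  refine ⟨⟨⟨inclusion hPQ, continuous_inclusion hPQ⟩, retraction, ?_, ?_⟩⟩
  · convert homotopic_id_iterate hP_id n using 1
    ext x
    exact (hP.coe_iterate_restrict x n).symm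
  · convert homotopic_id_iterate hQ_id n using 1
    ext x
    exact (hQ.coe_iterate_restrict x n).symm

lemma homotopic_id_of_segment_subset {E : Type*} [AddCommGroup E] [Module ℝ E] [TopologicalSpace E]
    [IsTopologicalAddGroup E] [ContinuousSMul ℝ E] {Q : Set E} {F : E → E} (hF : Continuous F)
    (hQ : MapsTo F Q Q) (hseg : ∀ x ∈ Q, segment ℝ x (F x) ⊆ Q) :
    ContinuousMap.Homotopic ⟨hQ.restrict, hF.restrict hQ⟩ (.id Q) := by
  have hmem (p : unitInterval × Q) : AffineMap.lineMap (p.2 : E) (F p.2) (p.1 : ℝ) ∈ Q :=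
    hseg p.2 p.2.2 (segment_eq_image_lineMap ℝ (p.2 : E) (F p.2) ▸ mem_image_of_mem _ p.1.2)
  refine .symm ⟨⟨⟨fun p ↦ ⟨_, hmem p⟩, ?_⟩, ?_, ?_⟩⟩
  · simp only [AffineMap.lineMap_apply_module]
    fun_prop
  · intro x
    ext
    simp
  · intro x
    ext
    simp

end Homotopy

section Topology

lemma exists_continuousMap_forall_mem_of_isOpen {X F : Type*} [TopologicalSpace X] [NormalSpace X]
    [ParacompactSpace X] [AddCommGroup F] [Module ℝ F] [TopologicalSpace F] [ContinuousAdd F]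
    [ContinuousSMul ℝ F] {U : Set (X × F)} (hU : IsOpen U)
    (hconv : ∀ x, Convex ℝ {v | (x, v) ∈ U}) {Z : Set X} (hZ : IsClosed Z)
    (hne : ∀ x ∈ Z, ∃ v, (x, v) ∈ U) :
    ∃ V : C(X, F), ∀ x ∈ Z, (x, V x) ∈ U := by
  refine exists_continuous_forall_mem_convex_of_local_const
    (t := fun x ↦ {v | x ∈ Z → (x, v) ∈ U}) ?_ ?_
  · exact fun x u hu v hv a b ha hb hab hx ↦ hconv x (hu hx) (hv hx) ha hb hab
  · intro x
    by_cases hx : x ∈ Z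
    · obtain ⟨v, hv⟩ := hne x hx
      have hopen : IsOpen {y | (y, v) ∈ U} := hU.preimage (by fun_prop)
      exact ⟨v, mem_of_superset (hopen.mem_nhds hv) fun y hy _ ↦ hy⟩
    · exact ⟨0, mem_of_superset (hZ.isOpen_compl.mem_nhds hx) fun y hy hyZ ↦ absurd hyZ hy⟩

lemma exists_pos_forall_sub_le_mem {X : Type*} [TopologicalSpace X] {B U : Set X} {f : X → ℝ}
    {c : ℝ} (hB : IsCompact B) (hU : IsOpen U) (hf : Continuous f)
    (h : ∀ x ∈ B, c ≤ f x → x ∈ U) :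
    ∃ ε > 0, ∀ x ∈ B, c - ε ≤ f x → x ∈ U := by
  obtain ⟨e, he, hle⟩ := (hB.inter_right hU.isClosed_compl).exists_forall_le'
    (f := fun x ↦ c - f x) (by fun_prop) (a := 0) fun x ⟨hxB, hxU⟩ ↦
      sub_pos.2 (not_le.1 fun hcx ↦ hxU (h x hxB hcx))
  refine ⟨e / 2, half_pos he, fun x hxB hx ↦ ?_⟩
  by_contra hxU
  linarith [hle x ⟨hxB, hxU⟩]

lemma exists_mapsTo_iterate_of_decrease {X : Type*} {P Q : Set X} {F : X → X} {φ : X → ℝ}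
    {κ m D : ℝ} (hκ : 0 < κ) (hP : MapsTo F P P) (hQ : MapsTo F Q Q)
    (hm : ∀ x ∈ Q, m ≤ φ x) (hD : ∀ x ∈ Q, φ x ≤ D)
    (hdec : ∀ x ∈ Q, x ∉ P → φ (F x) ≤ φ x - κ) :
    ∃ n, MapsTo F^[n] Q P := by
  obtain ⟨n, hn⟩ := exists_nat_gt ((D - m) / κ)
  rw [div_lt_iff₀ hκ] at hn
  refine ⟨n, fun x hx ↦ ?_⟩
  have mem_or_le (k : ℕ) : F^[k] x ∈ P ∨ φ (F^[k] x) ≤ D - k * κ := by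
    induction k with
    | zero => simpa using Or.inr (hD x hx)
    | succ k ih =>
      rw [Function.iterate_succ_apply']
      by_cases hk : F^[k] x ∈ P
      · exact .inl (hP hk)
      · have hle := ih.resolve_left hk
        have hstep := hdec _ (hQ.iterate k hx) hk
        push_cast
        exact .inr (by linarith)
  refine (mem_or_le n).resolve_right fun hle ↦ ?_
  linarith [hm _ (hQ.iterate n hx)]

/-- Among the points of the ball reached from `x` at slope at least `μ`, one maximising `f` works:
otherwise a further step of slope `μ` would improve it. -/
lemma exists_dist_le_of_frequently_slope {X : Type*} [MetricSpace X] [ProperSpace X] {f : X → ℝ}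
    (hf : Continuous f) {μ b l : ℝ} (hμ : 0 < μ) (hl : 0 ≤ l) (x : X)
    (hslope : ∀ y, f y ∈ Ico (f x) b → ∃ᶠ z in 𝓝[≠] y, f y + μ * dist z y ≤ f z) :
    ∃ y, dist y x ≤ l ∧ (f x + μ * l ≤ f y ∨ b ≤ f y) := by
  have hcompact : IsCompact (closedBall x l ∩ {y | f x + μ * dist y x ≤ f y}) :=
    (isCompact_closedBall x l).inter_right (isClosed_le (by fun_prop) hf)
  obtain ⟨y, ⟨hyl, hyf⟩, hmax⟩ := hcompact.exists_isMaxOn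
    ⟨x, mem_closedBall_self hl, by simp⟩ hf.continuousOn
  simp only [mem_ofPred_eq, mem_closedBall] at hyl hyf
  refine ⟨y, hyl, ?_⟩
  by_contra! hlow
  have hyl' : dist y x < l := lt_of_mul_lt_mul_left (by linarith) hμ.le
  have hfxy : f x ≤ f y := by linarith [mul_nonneg hμ.le (dist_nonneg (x := y) (y := x))]
  have hball : ∀ᶠ z in 𝓝[≠] y, z ∈ closedBall x l ∧ z ≠ y :=
    inter_mem (mem_nhdsWithin_of_mem_nhds (closedBall_mem_nhds_of_mem hyl')) self_mem_nhdsWithin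
  obtain ⟨z, hz, hzl, hzy⟩ := ((hslope y ⟨hfxy, hlow.2⟩).and_eventually hball).exists
  have hzx : f x + μ * dist z x ≤ f z := by
    linarith [mul_le_mul_of_nonneg_left (dist_triangle z y x) hμ.le]
  have hzmax : f z ≤ f y := hmax ⟨hzl, hzx⟩
  linarith [mul_pos hμ (dist_pos.2 hzy)]

end Topology

section Offset

/-- The `r`-offset `K_r` of `K`, that is, a sublevel set of the distance function `d_K`. -/
def offset {X : Type*} [PseudoMetricSpace X] (K : Set X) (r : ℝ) : Set X :=
  {x | infDist x K ≤ r}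

/-- The set `Γ_K(x)` of points of `K` nearest to `x`. -/
def nearestPoints {X : Type*} [PseudoMetricSpace X] (K : Set X) (x : X) : Set X :=
  {q ∈ K | dist x q = infDist x K}

variable {X : Type*} [PseudoMetricSpace X] {K : Set X}

lemma nearestPoints_nonempty (hK : IsCompact K) (hne : K.Nonempty) (x : X) :
    (nearestPoints K x).Nonempty :=
  let ⟨q, hq, hxq⟩ := hK.exists_infDist_eq_dist hne x
  ⟨q, hq, hxq.symm⟩

lemma isClosed_setOfPred_mem_nearestPoints (hK : IsClosed K) :
    IsClosed {p : X × X | p.2 ∈ nearestPoints K p.1} :=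
  (hK.preimage continuous_snd).inter
    (isClosed_eq continuous_dist ((continuous_infDist_pt K).comp continuous_fst))

lemma isCompact_offset [ProperSpace X] (hK : IsCompact K) (hne : K.Nonempty) (r : ℝ) :
    IsCompact (offset K r) := by
  refine isCompact_of_isClosed_isBounded
    (isClosed_le (continuous_infDist_pt K) continuous_const)
    ((hK.isBounded.cthickening (δ := r)).subset fun x hx ↦ ?_)
  obtain ⟨q, hq, hxq⟩ := hK.exists_infDist_eq_dist hne x
  exact mem_cthickening_of_dist_le x q r K hq (hxq ▸ hx)

lemma abs_infDist_sub_infDist_le_hausdorffDist {S A : Set X} (hSne : S.Nonempty)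
    (hS : Bornology.IsBounded S) (hAne : A.Nonempty) (hA : Bornology.IsBounded A) (x : X) :
    |infDist x S - infDist x A| ≤ hausdorffDist S A := by
  have hfin := hausdorffEDist_ne_top_of_nonempty_of_bounded hSne hAne hS hA
  have hAS : infDist x A ≤ infDist x S + hausdorffDist S A :=
    infDist_le_infDist_add_hausdorffDist hfin
  have hSA : infDist x S ≤ infDist x A + hausdorffDist A S :=
    infDist_le_infDist_add_hausdorffDist (by rwa [hausdorffEDist_comm])
  rw [hausdorffDist_comm] at hSA
  exact abs_sub_le_iff.2 ⟨by linarith, by linarith⟩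

end Offset

section InnerProductSpace

variable {E : Type*} [NormedAddCommGroup E] [InnerProductSpace ℝ E] {K S A : Set E} {x : E}

section Descent

/-- `v` is a descent direction of `d_K` at `x`: it makes an acute angle with the direction to every
point of `K` nearest to `x`. -/
def IsDescentDirection (K : Set E) (x v : E) : Prop :=
  ∀ q ∈ nearestPoints K x, 0 < inner ℝ v (q - x)

lemma isOpen_setOfPred_isDescentDirection (hK : IsCompact K) :
    IsOpen {p : E × E | IsDescentDirection K p.1 p.2} := by
  have : CompactSpace K := isCompact_iff_compactSpace.mp hK
  have hnear : IsClosed {p : (E × E) × K | (p.2 : E) ∈ nearestPoints K p.1.1} :=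
    (isClosed_setOfPred_mem_nearestPoints hK.isClosed).preimage
      (f := fun p : (E × E) × K ↦ (p.1.1, (p.2 : E))) (by fun_prop)
  have hinner : IsClosed {p : (E × E) × K | inner ℝ p.1.2 ((p.2 : E) - p.1.1) ≤ 0} :=
    isClosed_le (by fun_prop) (by fun_prop)
  rw [← isClosed_compl_iff]
  convert isClosedMap_fst_of_compactSpace _ (hnear.inter hinner) using 1
  ext p
  simp only [IsDescentDirection, mem_compl_iff, mem_ofPred_eq, mem_image, mem_inter_iff]
  push Not
  constructor
  · rintro ⟨q, hq, hle⟩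
    exact ⟨(p, ⟨q, hq.1⟩), ⟨hq, hle⟩, rfl⟩
  · rintro ⟨⟨_, q⟩, ⟨hq, hle⟩, rfl⟩
    exact ⟨q, hq, hle⟩

lemma convex_setOfPred_isDescentDirection (K : Set E) (x : E) :
    Convex ℝ {v | IsDescentDirection K x v} := by
  simp only [IsDescentDirection, ofPred_forall]
  exact convex_iInter₂ fun q _ ↦
    convex_halfSpace_gt ⟨fun u v ↦ inner_add_left u v _, fun c v ↦ real_inner_smul_left v _ c⟩ 0

lemma infDist_add_smul_sq_le {q : E} (hq : q ∈ nearestPoints K x) (v : E) (t : ℝ) :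
    infDist (x + t • v) K ^ 2 ≤
      infDist x K ^ 2 - 2 * t * inner ℝ v (q - x) + t ^ 2 * ‖v‖ ^ 2 := by
  have hexpand : dist (x + t • v) q ^ 2 =
      dist x q ^ 2 - 2 * t * inner ℝ v (q - x) + t ^ 2 * ‖v‖ ^ 2 := by
    rw [dist_comm, dist_comm x, dist_eq_norm, dist_eq_norm, ← sub_sub, norm_sub_sq_real,
      real_inner_smul_right, norm_smul, mul_pow, Real.norm_eq_abs, sq_abs, real_inner_comm]
    ring
  rw [← hq.2, ← hexpand]
  exact pow_le_pow_left₀ infDist_nonneg (infDist_le_dist_of_mem hq.1) 2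

lemma exists_forall_infDist_add_smul_sq_le (hK : IsCompact K) (hne : K.Nonempty) {Z : Set E}
    (hZ : IsCompact Z) {V : E → E} (hV : Continuous V)
    (hdesc : ∀ x ∈ Z, IsDescentDirection K x (V x)) :
    ∃ η > 0, ∀ x ∈ Z, ∀ t ∈ Icc 0 η,
      infDist (x + t • V x) K ^ 2 ≤ infDist x K ^ 2 - t * η := by
  obtain ⟨θ, hθ, hθ_le⟩ :=
    ((hZ.prod hK).inter_right (isClosed_setOfPred_mem_nearestPoints hK.isClosed)).exists_forall_le'
      (f := fun p : E × E ↦ inner ℝ (V p.1) (p.2 - p.1)) (by fun_prop) (a := 0)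
      fun p ⟨hp, hpK⟩ ↦ hdesc p.1 hp.1 p.2 hpK
  obtain ⟨M, hM_pos, hM⟩ : ∃ M > 0, ∀ x ∈ Z, ‖V x‖ ^ 2 ≤ M := by
    obtain ⟨M, hM⟩ := hZ.bddAbove_image (f := fun x ↦ ‖V x‖ ^ 2) (by fun_prop)
    exact ⟨max M 1, by positivity, fun x hx ↦ le_max_of_le_left (hM (mem_image_of_mem _ hx))⟩
  refine ⟨min θ (θ / M), by positivity, fun x hx t ht ↦ ?_⟩
  obtain ⟨q, hq⟩ := nearestPoints_nonempty hK hne x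
  have hinner : θ ≤ inner ℝ (V x) (q - x) := hθ_le (x, q) ⟨⟨hx, hq.1⟩, hq⟩
  have htM : t * M ≤ θ := (le_div_iff₀ hM_pos).1 (ht.2.trans (min_le_right _ _))
  calc infDist (x + t • V x) K ^ 2
      ≤ infDist x K ^ 2 - 2 * t * inner ℝ (V x) (q - x) + t ^ 2 * ‖V x‖ ^ 2 :=
        infDist_add_smul_sq_le hq _ _
    _ ≤ infDist x K ^ 2 - 2 * t * θ + t ^ 2 * M := by
        have := ht.1
        gcongr
        exact hM x hx
    _ = infDist x K ^ 2 - t * θ - t * (θ - t * M) := by ring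
    _ ≤ infDist x K ^ 2 - t * θ := sub_le_self _ (mul_nonneg ht.1 (sub_nonneg.2 htM))
    _ ≤ infDist x K ^ 2 - t * min θ (θ / M) := by
        gcongr
        exacts [ht.1, min_le_left _ _]

/-- The Pythagorean comparison `d(y, q)² > d(y, x)² + d(x, q)²` says that the angle at `x` between
`y` and each nearest point `q` is obtuse. -/
lemma isDescentDirection_sub {y : E} (h : dist y x ^ 2 + infDist x K ^ 2 < infDist y K ^ 2) :
    IsDescentDirection K x (x - y) := by
  rintro q ⟨hqK, hxq⟩
  have hyq : infDist y K ^ 2 ≤ dist y q ^ 2 :=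
    pow_le_pow_left₀ infDist_nonneg (infDist_le_dist_of_mem hqK) 2
  have hcos : dist y q ^ 2 = dist y x ^ 2 + dist x q ^ 2 + 2 * inner ℝ (x - y) (q - x) := by
    rw [dist_comm y q, dist_comm y x, dist_comm x q, dist_eq_norm, dist_eq_norm, dist_eq_norm,
      ← sub_add_sub_cancel q x y, norm_add_sq_real, real_inner_comm]
    ring
  rw [hxq] at hcos
  linarith

end Descent

section Deformation

lemma exists_forall_infDist_add_smul_le (hS : IsCompact S) (hSne : S.Nonempty) (hA : IsCompact A)
    (hAne : A.Nonempty) {B : Set E} (hB : IsCompact B) {c : ℝ} {V : E → E} (hV : Continuous V)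
    (hdesc : ∀ x ∈ B, c ≤ infDist x S →
      IsDescentDirection S x (V x) ∧ IsDescentDirection A x (V x)) :
    ∃ ε > 0, ∃ h > (0 : ℝ), ∃ κ > 0, ∀ x ∈ B, ∀ t ∈ Icc 0 h, ‖t • V x‖ ≤ ε ∧
      (c - ε ≤ infDist x S → infDist (x + t • V x) S ^ 2 ≤ infDist x S ^ 2 - t * κ ∧
        infDist (x + t • V x) A ≤ infDist x A) := by
  have hopen {K : Set E} (hK : IsCompact K) : IsOpen {x | IsDescentDirection K x (V x)} :=
    (isOpen_setOfPred_isDescentDirection hK).preimage (f := fun x ↦ (x, V x)) (by fun_prop)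
  obtain ⟨ε, hε, hdesc'⟩ := exists_pos_forall_sub_le_mem hB ((hopen hS).inter (hopen hA))
    (continuous_infDist_pt S) hdesc
  have hZ : IsCompact (B ∩ {x | c - ε ≤ infDist x S}) :=
    hB.inter_right (isClosed_le continuous_const (continuous_infDist_pt S))
  obtain ⟨ηS, hηS, hdecS⟩ := exists_forall_infDist_add_smul_sq_le hS hSne hZ hV
    fun x hx ↦ (hdesc' x hx.1 hx.2).1
  obtain ⟨ηA, hηA, hdecA⟩ := exists_forall_infDist_add_smul_sq_le hA hAne hZ hV
    fun x hx ↦ (hdesc' x hx.1 hx.2).2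
  obtain ⟨M, hM⟩ := hB.exists_bound_of_continuousOn hV.continuousOn
  obtain ⟨h, hh, hhS, hhA, hhM⟩ : ∃ h > 0, h ≤ ηS ∧ h ≤ ηA ∧ h * max M 1 ≤ ε :=
    ⟨min ηS (min ηA (ε / max M 1)), by positivity, by simp, by simp,
      (le_div_iff₀ (by positivity)).1 (by simp)⟩
  refine ⟨ε, hε, h, hh, ηS, hηS, fun x hx t ht ↦ ⟨?_, fun hlevel ↦ ⟨?_, ?_⟩⟩⟩
  · rw [norm_smul, Real.norm_of_nonneg ht.1]
    exact (mul_le_mul ht.2 (le_max_of_le_left (hM x hx)) (norm_nonneg _) hh.le).trans hhM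
  · exact hdecS x ⟨hx, hlevel⟩ t ⟨ht.1, ht.2.trans hhS⟩
  · exact le_of_sq_le_sq ((hdecA x ⟨hx, hlevel⟩ t ⟨ht.1, ht.2.trans hhA⟩).trans
      (sub_le_self _ (mul_nonneg ht.1 hηA.le))) infDist_nonneg

variable [ProperSpace E]

lemma exists_step_of_isDescentDirection (hS : IsCompact S) (hSne : S.Nonempty) (hA : IsCompact A)
    (hAne : A.Nonempty) {c r : ℝ} (hsub : offset S c ⊆ offset A r) {V : E → E} (hV : Continuous V)
    (hdesc : ∀ x ∈ offset A r, c ≤ infDist x S →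
      IsDescentDirection S x (V x) ∧ IsDescentDirection A x (V x)) :
    ∃ h > (0 : ℝ), (∀ x ∈ offset S c, ∀ t ∈ Icc 0 h, x + t • V x ∈ offset S c) ∧
      (∀ x ∈ offset A r, ∀ t ∈ Icc 0 h, x + t • V x ∈ offset A r) ∧
      ∃ κ > 0, ∀ x ∈ offset A r, x ∉ offset S c →
        infDist (x + h • V x) S ^ 2 ≤ infDist x S ^ 2 - κ := by
  obtain ⟨ε, hε, h, hh, κ, hκ, hstep⟩ := exists_forall_infDist_add_smul_le hS hSne hA hAne
    (isCompact_offset hA hAne r) hV hdesc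
  have stepS : ∀ x ∈ offset S c, ∀ t ∈ Icc 0 h, x + t • V x ∈ offset S c := by
    intro x hx t ht
    obtain ⟨hshort, hdec⟩ := hstep x (hsub hx) t ht
    by_cases hlevel : c - ε ≤ infDist x S
    · exact (le_of_sq_le_sq ((hdec hlevel).1.trans (sub_le_self _ (mul_nonneg ht.1 hκ.le)))
        infDist_nonneg).trans hx
    -- The field is uncontrolled here, but the step is too short to reach level `c`.
    · have hlip : infDist (x + t • V x) S ≤ infDist x S + ‖t • V x‖ := by
        simpa using infDist_le_infDist_add_dist (x := x + t • V x) (y := x) (s := S)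
      exact hlip.trans (by linarith)
  refine ⟨h, hh, stepS, fun x hx t ht ↦ ?_, h * κ, mul_pos hh hκ, fun x hx hxS ↦ ?_⟩
  · by_cases hlevel : c - ε ≤ infDist x S
    · exact ((hstep x hx t ht).2 hlevel).2.trans hx
    · have hxS : infDist x S ≤ c := by linarith
      exact hsub (stepS x hxS t ht)
  · have hxc : c < infDist x S := not_le.1 hxS
    exact ((hstep x hx h ⟨hh.le, le_rfl⟩).2 (by linarith)).1

theorem nonempty_homotopyEquiv_offset_of_isDescentDirection (hS : IsCompact S) (hSne : S.Nonempty)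
    (hA : IsCompact A) (hAne : A.Nonempty) {c r : ℝ} (hsub : offset S c ⊆ offset A r)
    (hdesc : ∀ x ∈ offset A r, c ≤ infDist x S →
      ∃ v, IsDescentDirection S x v ∧ IsDescentDirection A x v) :
    Nonempty (ContinuousMap.HomotopyEquiv (offset S c) (offset A r)) := by
  have hAr := isCompact_offset hA hAne r
  obtain ⟨V, hV⟩ := exists_continuousMap_forall_mem_of_isOpen
    ((isOpen_setOfPred_isDescentDirection hS).inter (isOpen_setOfPred_isDescentDirection hA))
    (fun x ↦ (convex_setOfPred_isDescentDirection S x).inter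
      (convex_setOfPred_isDescentDirection A x))
    (hAr.isClosed.inter (isClosed_le continuous_const (continuous_infDist_pt S)))
    fun x hx ↦ hdesc x hx.1 hx.2
  obtain ⟨h, hh, stepS, stepA, κ, hκ, hdec⟩ := exists_step_of_isDescentDirection hS hSne hA hAne
    hsub V.continuous fun x hx hxc ↦ hV x ⟨hx, hxc⟩
  have hF : Continuous fun x ↦ x + h • V x := by fun_prop
  have hmaps {Q : Set E} (step : ∀ x ∈ Q, ∀ t ∈ Icc 0 h, x + t • V x ∈ Q) :
      MapsTo (fun x ↦ x + h • V x) Q Q := fun x hx ↦ step x hx h ⟨hh.le, le_rfl⟩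
  have hid {Q : Set E} (step : ∀ x ∈ Q, ∀ t ∈ Icc 0 h, x + t • V x ∈ Q) :=
    homotopic_id_of_segment_subset hF (hmaps step) fun x hx ↦ by
      rw [segment_eq_image', image_subset_iff]
      intro t ht
      simpa [smul_smul] using step x hx (t * h)
        ⟨mul_nonneg ht.1 hh.le, mul_le_of_le_one_left hh.le ht.2⟩
  obtain ⟨D, hD⟩ := hAr.bddAbove_image
    (f := fun x ↦ infDist x S ^ 2) ((continuous_infDist_pt S).pow 2).continuousOn
  obtain ⟨n, hn⟩ := exists_mapsTo_iterate_of_decrease (φ := fun x ↦ infDist x S ^ 2) hκ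
    (hmaps stepS) (hmaps stepA) (fun x _ ↦ sq_nonneg _) (fun x hx ↦ hD (mem_image_of_mem _ hx)) hdec
  exact nonempty_homotopyEquiv_of_mapsTo_iterate hF hsub (hmaps stepS) (hmaps stepA)
    (hid stepS) (hid stepA) hn

end Deformation

section Critical

/-- `x` is a `μ`-critical point of `d_K`: the convex hull of the points of `K` nearest to `x` comes
within `μ * d_K(x)` of `x`. -/
def IsCritical (μ : ℝ) (K : Set E) (x : E) : Prop :=
  infDist x (convexHull ℝ (nearestPoints K x)) ≤ μ * infDist x K

lemma lt_one_of_not_isCritical (hK : IsCompact K) (hne : K.Nonempty) {μ : ℝ}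
    (h : ¬ IsCritical μ K x) : μ < 1 := by
  obtain ⟨q, hq⟩ := nearestPoints_nonempty hK hne x
  have hle : infDist x (convexHull ℝ (nearestPoints K x)) ≤ infDist x K :=
    hq.2 ▸ infDist_le_dist_of_mem (subset_convexHull ℝ _ hq)
  by_contra! hμ
  exact h (hle.trans (le_mul_of_one_le_left infDist_nonneg hμ))

lemma exists_norm_eq_one_infDist_le_inner [CompleteSpace E] {C : Set E} (hC : Convex ℝ C)
    (hne : C.Nonempty) (hx : 0 < infDist x C) :
    ∃ v : E, ‖v‖ = 1 ∧ ∀ q ∈ C, infDist x C ≤ inner ℝ v (x - q) := by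
  obtain ⟨p, hp, hmin⟩ := exists_norm_eq_iInf_of_complete_convex hne.closure
    isClosed_closure.isComplete hC.closure x
  rw [norm_eq_iInf_iff_real_inner_le_zero hC.closure hp] at hmin
  have hdist : infDist x C ≤ ‖x - p‖ := by
    rw [← infDist_closure, ← dist_eq_norm]
    exact infDist_le_dist_of_mem hp
  have hpos : 0 < ‖x - p‖ := hx.trans_le hdist
  refine ⟨‖x - p‖⁻¹ • (x - p), by simp [norm_smul, hpos.ne'], fun q hq ↦ ?_⟩
  have hinner : ‖x - p‖ ^ 2 ≤ inner ℝ (x - p) (x - q) := by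
    rw [← sub_sub_sub_cancel_right x q p, inner_sub_right, real_inner_self_eq_norm_sq]
    linarith [hmin q (subset_closure hq)]
  calc infDist x C ≤ ‖x - p‖ := hdist
    _ = ‖x - p‖⁻¹ * ‖x - p‖ ^ 2 := by field_simp
    _ ≤ ‖x - p‖⁻¹ * inner ℝ (x - p) (x - q) := by gcongr
    _ = inner ℝ (‖x - p‖⁻¹ • (x - p)) (x - q) := (real_inner_smul_left _ _ _).symm

lemma add_mul_le_dist_add_smul {R μ t : ℝ} {q v : E} (hR : 0 ≤ R) (hμ : |μ| ≤ 1) (ht : 0 ≤ t)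
    (hv : ‖v‖ = 1) (hxq : R ≤ dist x q) (hinner : μ * R ≤ inner ℝ v (x - q)) :
    R + μ * t ≤ dist (x + t • v) q := by
  refine le_of_sq_le_sq ?_ dist_nonneg
  have hexpand : dist (x + t • v) q ^ 2 = dist x q ^ 2 + 2 * (t * inner ℝ v (x - q)) + t ^ 2 := by
    rw [dist_eq_norm, add_sub_right_comm, norm_add_sq_real, real_inner_smul_right, norm_smul, hv,
      Real.norm_eq_abs, mul_one, sq_abs, real_inner_comm, dist_eq_norm]
  have hμt : μ ^ 2 * t ^ 2 ≤ 1 * t ^ 2 := by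
    gcongr
    exact (sq_le_one_iff_abs_le_one μ).2 hμ
  calc (R + μ * t) ^ 2 = R ^ 2 + 2 * (t * (μ * R)) + μ ^ 2 * t ^ 2 := by ring
    _ ≤ dist x q ^ 2 + 2 * (t * inner ℝ v (x - q)) + 1 * t ^ 2 := by gcongr
    _ = dist (x + t • v) q ^ 2 := by rw [hexpand, one_mul]

/-- Points `q` of `K` with `⟪v, x - q⟫ ≤ μ * d_K(x)` are not nearest, hence by compactness farther
than `d_K(x)` by a definite amount, which they keep for small `t`. -/
lemma eventually_add_mul_le_infDist_add_smul (hK : IsCompact K) (hne : K.Nonempty) {μ : ℝ}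
    (hμ : |μ| ≤ 1) {v : E} (hv : ‖v‖ = 1)
    (hinner : ∀ q ∈ nearestPoints K x, μ * infDist x K < inner ℝ v (x - q)) :
    ∀ᶠ t in 𝓝[>] (0 : ℝ), infDist x K + μ * t ≤ infDist (x + t • v) K := by
  obtain ⟨R, hR, hfar⟩ : ∃ R > infDist x K, ∀ q ∈ K ∩ {q | inner ℝ v (x - q) ≤ μ * infDist x K},
      R ≤ dist x q :=
    (hK.inter_right (isClosed_le (by fun_prop) (by fun_prop))).exists_forall_le' (by fun_prop)
      fun q ⟨hqK, hq⟩ ↦ (infDist_le_dist_of_mem hqK).lt_of_ne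
        fun heq ↦ (hinner q ⟨hqK, heq.symm⟩).not_ge hq
  filter_upwards [Ioo_mem_nhdsGT (half_pos (sub_pos.2 hR))] with t ht
  refine (le_infDist hne).2 fun q hqK ↦ ?_
  by_cases hq : inner ℝ v (x - q) ≤ μ * infDist x K
  · have hstep : dist x (x + t • v) = t := by simp [norm_smul, hv, abs_of_pos ht.1]
    have hμt : μ * t ≤ t := mul_le_of_le_one_left ht.1.le (abs_le.1 hμ).2
    linarith [hfar q ⟨hqK, hq⟩, dist_triangle x (x + t • v) q, ht.2]
  · exact add_mul_le_dist_add_smul infDist_nonneg hμ ht.1.le hv (infDist_le_dist_of_mem hqK)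
      (not_le.1 hq).le

lemma frequently_add_mul_dist_le_infDist [CompleteSpace E] (hK : IsCompact K) (hne : K.Nonempty)
    {μ : ℝ} (hμ : 0 ≤ μ) (h : ¬ IsCritical μ K x) :
    ∃ᶠ z in 𝓝[≠] x, infDist x K + μ * dist z x ≤ infDist z K := by
  have hlt : μ * infDist x K < infDist x (convexHull ℝ (nearestPoints K x)) := not_le.1 h
  obtain ⟨v, hv, hinner⟩ := exists_norm_eq_one_infDist_le_inner (convex_convexHull ℝ _)
    (nearestPoints_nonempty hK hne x).convexHull ((mul_nonneg hμ infDist_nonneg).trans_lt hlt)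
  have hgrow := eventually_add_mul_le_infDist_add_smul hK hne
    (abs_le.2 ⟨by linarith, (lt_one_of_not_isCritical hK hne h).le⟩) hv
    fun q hq ↦ hlt.trans_le (hinner q (subset_convexHull ℝ _ hq))
  have hray : Tendsto (fun t : ℝ ↦ x + t • v) (𝓝[>] 0) (𝓝[≠] x) := by
    refine tendsto_nhdsWithin_iff.2 ⟨?_, ?_⟩
    · have hcont : Continuous fun t : ℝ ↦ x + t • v := by fun_prop
      exact (hcont.tendsto' 0 x (by simp)).mono_left nhdsWithin_le_nhds
    · filter_upwards [self_mem_nhdsWithin] with t ht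
      have hv0 : v ≠ 0 := by
        rintro rfl
        simp at hv
      simpa using ⟨(mem_Ioi.1 ht).ne', hv0⟩
  refine hray.frequently (Eventually.frequently ?_)
  filter_upwards [hgrow, self_mem_nhdsWithin] with t hgrow ht
  simpa [norm_smul, hv, abs_of_pos (mem_Ioi.1 ht)] using hgrow

end Critical

section Sampling

lemma sq_four_mul_div_lt {μ r δ : ℝ} (hμ : 0 < μ) (hδ : 0 < δ) (hδr : δ < μ ^ 2 * r / (4 + μ ^ 2)) :
    (4 * δ / μ) ^ 2 < 4 * δ * (r - δ) := by
  rw [lt_div_iff₀ (by positivity)] at hδr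
  rw [div_pow, div_lt_iff₀ (by positivity)]
  linarith [mul_lt_mul_of_pos_left hδr (mul_pos four_pos hδ)]

lemma add_three_mul_le_of_le_mul_sub_div {μ r b δ : ℝ} (hμ : μ ∈ Ioo 0 1) (hδ : 0 ≤ δ)
    (hδb : δ ≤ μ * (b - r) / (4 - μ)) : r + 3 * δ ≤ b := by
  obtain ⟨hμ0, hμ1⟩ := hμ
  rw [le_div_iff₀ (by linarith)] at hδb
  have hle : μ * (3 * δ) ≤ μ * (b - r) := by
    linarith [mul_le_mul_of_nonneg_left hμ1.le hδ]
  linarith [le_of_mul_le_mul_left hle hμ0]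

variable [ProperSpace E]

lemma exists_isDescentDirection_of_not_isCritical {μ r δ : ℝ} (hμ : 0 < μ) (hδ : 0 < δ)
    (hδr : δ < μ ^ 2 * r / (4 + μ ^ 2)) (hS : IsCompact S) (hSne : S.Nonempty)
    (hcrit : ∀ y ∉ S, infDist y S ∈ Icc (r - δ) (r + 3 * δ) → ¬ IsCritical μ S y)
    (hSA : ∀ y, |infDist y S - infDist y A| ≤ δ) (hxA : x ∈ offset A r)
    (hxS : r - δ ≤ infDist x S) :
    ∃ v, IsDescentDirection S x v ∧ IsDescentDirection A x v := by
  have hsq := sq_four_mul_div_lt hμ hδ hδr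
  have hrδ : 0 < r - δ := pos_of_mul_pos_right ((sq_nonneg _).trans_lt hsq) (by positivity)
  obtain ⟨y, hyx, hy⟩ := exists_dist_le_of_frequently_slope (continuous_infDist_pt S) hμ
    (b := r + 3 * δ) (l := 4 * δ / μ) (by positivity) x fun z hz ↦
      frequently_add_mul_dist_le_infDist hS hSne hμ.le <|
        hcrit z (fun hzS ↦ by linarith [hz.1, infDist_zero_of_mem hzS]) ⟨hxS.trans hz.1, hz.2.le⟩
  rw [mul_div_cancel₀ _ hμ.ne'] at hy
  have hx_le : infDist x A ≤ r := hxA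
  have hSAx := abs_le.1 (hSA x)
  have hSAy := abs_le.1 (hSA y)
  have hgrow {K : Set E} (hKx : r - 2 * δ ≤ infDist x K)
      (hKy : infDist x K + 2 * δ ≤ infDist y K) : IsDescentDirection K x (x - y) :=
    isDescentDirection_sub <|
      calc dist y x ^ 2 + infDist x K ^ 2
          ≤ (4 * δ / μ) ^ 2 + infDist x K ^ 2 := by gcongr
        _ < 4 * δ * (r - δ) + infDist x K ^ 2 := by gcongr
        _ ≤ 4 * δ * (infDist x K + δ) + infDist x K ^ 2 := by gcongr; linarith
        _ = (infDist x K + 2 * δ) ^ 2 := by ring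
        _ ≤ infDist y K ^ 2 :=
          pow_le_pow_left₀ (add_nonneg infDist_nonneg (by positivity)) hKy 2
  exact ⟨x - y, hgrow (by linarith) (by rcases hy with hy | hy <;> linarith),
    hgrow (by linarith) (by rcases hy with hy | hy <;> linarith)⟩

lemma nonempty_homotopyEquiv_offset_sub {μ r δ : ℝ} (hμ : 0 < μ) (hδ : 0 < δ)
    (hδr : δ < μ ^ 2 * r / (4 + μ ^ 2)) (hS : IsCompact S) (hSne : S.Nonempty)
    (hA : IsCompact A) (hAne : A.Nonempty)
    (hcrit : ∀ y ∉ S, infDist y S ∈ Icc (r - δ) (r + 3 * δ) → ¬ IsCritical μ S y)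
    (hSA : hausdorffDist S A ≤ δ) :
    Nonempty (ContinuousMap.HomotopyEquiv (offset S (r - δ)) (offset A r)) := by
  have hclose (y : E) : |infDist y S - infDist y A| ≤ δ :=
    (abs_infDist_sub_infDist_le_hausdorffDist hSne hS.isBounded hAne hA.isBounded y).trans hSA
  refine nonempty_homotopyEquiv_offset_of_isDescentDirection hS hSne hA hAne (fun x hx ↦ ?_)
    fun x hxA hxS ↦ exists_isDescentDirection_of_not_isCritical hμ hδ hδr hS hSne hcrit hclose
      hxA hxS
  have hx_le : infDist x S ≤ r - δ := hx
  exact show infDist x A ≤ r by linarith [(abs_le.1 (hclose x)).1]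

theorem stmt14_general {μ r : ℝ} (hμ : 0 < μ) (hS : IsCompact S) (hSne : S.Nonempty)
    (hA : IsCompact A) (hAne : A.Nonempty)
    (hcrit : ∀ x ∉ S, infDist x S ∈ Icc (r - hausdorffDist S A) (r + 3 * hausdorffDist S A) →
      ¬ IsCritical μ S x)
    (hδ : hausdorffDist S A < μ ^ 2 * r / (4 + μ ^ 2)) :
    Nonempty (ContinuousMap.HomotopyEquiv (offset S r) (offset A r)) := by
  rcases (hausdorffDist_nonneg (s := S) (t := A)).eq_or_lt with hzero | hpos
  · have hfin := hausdorffEDist_ne_top_of_nonempty_of_bounded hSne hAne hS.isBounded hA.isBounded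
    obtain rfl := (hS.isClosed.hausdorffDist_zero_iff_eq hA.isClosed hfin).1 hzero.symm
    exact ⟨.refl _⟩
  · obtain ⟨eS⟩ := nonempty_homotopyEquiv_offset_sub hμ hpos hδ hS hSne hS hSne hcrit
      (hausdorffDist_self_zero.trans_le hpos.le)
    obtain ⟨eA⟩ := nonempty_homotopyEquiv_offset_sub hμ hpos hδ hS hSne hA hAne hcrit le_rfl
    exact ⟨eS.symm.trans eA⟩

end Sampling

end InnerProductSpace

/-- Sampling corollary (conditions on the known point cloud `S`): under the stated bounds on
`δ = d_H(S,A)` and the absence of μ-critical points of `d_S` in the annulus `S_[a,b]`,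
the offsets `S_r` and `A_r` are homotopy equivalent. -/
theorem stmt14 {E : Type*} [NormedAddCommGroup E] [InnerProductSpace ℝ E]
    [FiniteDimensional ℝ E]
    (μ : ℝ) (hμ : μ ∈ Set.Ioo (0 : ℝ) 1) (r a b : ℝ) (hr : 0 < r)
    (ha : 0 ≤ a) (hb : r ≤ b)
    (A S : Set E) (hAne : A.Nonempty) (hAc : IsCompact A)
    (hSne : S.Nonempty) (hSc : IsCompact S)
    (hcrit : ∀ x : E, x ∉ S → infDist x S ∈ Set.Icc a b →
      ¬ (infDist x (convexHull ℝ {q ∈ S | dist x q = infDist x S}) ≤ μ * infDist x S))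
    (hδ1 : hausdorffDist S A ≤ min (r - a) (μ * (b - r) / (4 - μ)))
    (hδ2 : hausdorffDist S A < μ ^ 2 * r / (4 + μ ^ 2)) :
    Nonempty (ContinuousMap.HomotopyEquiv
      ({x : E | infDist x S ≤ r} : Set E)
      ({x : E | infDist x A ≤ r} : Set E)) := by
  obtain ⟨hδa, hδb⟩ := le_min_iff.1 hδ1
  have hb3 := add_three_mul_le_of_le_mul_sub_div hμ hausdorffDist_nonneg hδb
  exact stmt14_general hμ.1 hSc hSne hAc hAne
    (fun x hxS hx ↦ hcrit x hxS ⟨by linarith [hx.1], hx.2.trans hb3⟩) hδ2
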